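/- arXiv:1004.1854 — 3 statements merged into one kernel-verified Lean document; each statement's English description precedes it below -/
import Mathlib

section
/- Consider a minimum effort game with uniform budgets (B_v = 1 for every player v) in which every function h_e is convex. Then every pairwise equilibrium s satisfies w(s*) ≤ 2·w(s) for every state s*; i.e., the price of anarchy for pairwise equilibria is at most 2. -/
open Finset

/-- A network contribution game on a finite simple undirected graph. -/
structure NCGame (V : Type) [Fintype V] [DecidableEq V] where
  /-- adjacency relation of the (simple, undirected) graph -/
  Adj : V → V → Prop
  adj_symm : ∀ u v, Adj u v → Adj v u
  adj_irrefl : ∀ v, ¬ Adj v v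
  /-- budget of each player -/
  B : V → ℝ
  B_nonneg : ∀ v, 0 ≤ B v
  /-- reward function of each edge; `f u v x y` is the reward of edge `(u,v)`
  when `u` contributes `x` and `v` contributes `y`. -/
  f : V → V → ℝ → ℝ → ℝ
  f_comm : ∀ u v x y, f u v x y = f v u x y
  f_symm : ∀ u v x y, f u v x y = f u v y x
  f_nonneg : ∀ u v x y, 0 ≤ x → 0 ≤ y → 0 ≤ f u v x y
  f_mono : ∀ u v y, 0 ≤ y → MonotoneOn (fun x => f u v x y) (Set.Ici 0)

variable {V : Type} [Fintype V] [DecidableEq V]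

/-- A state: `s v u` is the effort player `v` puts on the edge `(v,u)`.
It is valid if efforts are nonnegative, supported on edges, and within budget. -/
def validState (g : NCGame V) (s : V → V → ℝ) : Prop :=
  (∀ v u, 0 ≤ s v u) ∧ (∀ v u, ¬ g.Adj v u → s v u = 0) ∧
  (∀ v, ∑ u, s v u ≤ g.B v)

open Classical in
/-- utility of player `v` -/
noncomputable def util (g : NCGame V) (s : V → V → ℝ) (v : V) : ℝ :=
  ∑ u, if g.Adj v u then g.f v u (s v u) (s u v) else 0

/-- social welfare -/
noncomputable def welfare (g : NCGame V) (s : V → V → ℝ) : ℝ :=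
  ∑ v, util g s v

/-- Nash equilibrium: no unilateral improving deviation. -/
def IsNashEq (g : NCGame V) (s : V → V → ℝ) : Prop :=
  validState g s ∧
  ∀ v (t : V → ℝ), validState g (Function.update s v t) →
    util g (Function.update s v t) v ≤ util g s v

/-- Pairwise equilibrium: Nash and no bilateral improving deviation. -/
def IsPairwiseEq (g : NCGame V) (s : V → V → ℝ) : Prop :=
  IsNashEq g s ∧
  ∀ u v (tu tv : V → ℝ), u ≠ v →
    validState g (Function.update (Function.update s u tu) v tv) →
    ¬(util g s u < util g (Function.update (Function.update s u tu) v tv) u ∧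
      util g s v < util g (Function.update (Function.update s u tu) v tv) v)

/-- Strong equilibrium: no coalition has a joint deviation strictly improving
the utility of all its members. -/
def IsStrongEq (g : NCGame V) (s : V → V → ℝ) : Prop :=
  validState g s ∧
  ∀ (C : Finset V) (s' : V → V → ℝ), C.Nonempty → validState g s' →
    (∀ v, v ∉ C → s' v = s v) →
    ∃ v ∈ C, util g s' v ≤ util g s v

/-- class `C`: symmetric, nonnegative, nondecreasing, coordinate-convex. -/
def InClassC (f : ℝ → ℝ → ℝ) : Prop :=
  (∀ x y, 0 ≤ x → 0 ≤ y → 0 ≤ f x y) ∧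
  (∀ x y, f x y = f y x) ∧
  (∀ y, 0 ≤ y → MonotoneOn (fun x => f x y) (Set.Ici 0)) ∧
  (∀ y, 0 ≤ y → ConvexOn ℝ (Set.Ici 0) (fun x => f x y))

/-- class `C₀`: members of `C` vanishing when one argument is `0`. -/
def InClassC0 (f : ℝ → ℝ → ℝ) : Prop :=
  InClassC f ∧ ∀ x, 0 ≤ x → f x 0 = 0

/-- An edge is tight in `s` if both endpoints contribute `0` or their full budget. -/
def tightState (g : NCGame V) (s : V → V → ℝ) : Prop :=
  ∀ u v, g.Adj u v → s u v = 0 ∨ s u v = g.B u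

/-!
In a pairwise equilibrium `s`, an edge on which both endpoints spent their whole budgets would pay
at most what one of the two endpoints already earns in `s`; otherwise they would jointly deviate to
that edge. If rewards grow at most proportionally to the budget share invested by either endpoint,
that endpoint can therefore pay for the reward of the edge in any other state out of the share of
its budget it invests there. Budget shares sum to at most one, so each player pays its
equilibrium utility at most twice, once for each of the two endpoints collecting the reward.
-/

section Charging

variable {ι : Type*} [Fintype ι]

theorem sum_sum_mul_add_mul_swap_le_two_mul_sum {φ : ι → ι → ℝ} {U : ι → ℝ}
    (hφ : ∀ i, ∑ j, φ i j ≤ 1) (hU : ∀ i, 0 ≤ U i) :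
    ∑ i, ∑ j, (φ i j * U i + φ j i * U j) ≤ 2 * ∑ i, U i := by
  have row_le (i : ι) : ∑ j, φ i j * U i ≤ U i := by
    rw [← sum_mul]
    exact mul_le_of_le_one_left (hU i) (hφ i)
  calc ∑ i, ∑ j, (φ i j * U i + φ j i * U j)
      = ∑ i, ∑ j, φ i j * U i + ∑ i, ∑ j, φ j i * U j := by simp only [sum_add_distrib]
    _ = 2 * ∑ i, ∑ j, φ i j * U i := by rw [sum_comm (f := fun i j ↦ φ j i * U j), two_mul]
    _ ≤ 2 * ∑ i, U i := by gcongr with i; exact row_le i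

end Charging

section Definitions

variable (g : NCGame V)

/-- A valid state that no two players can leave jointly with a strict gain for both: a pairwise
equilibrium without the requirement of being a Nash equilibrium. -/
def IsBilaterallyStable (s : V → V → ℝ) : Prop :=
  validState g s ∧
  ∀ u v (tu tv : V → ℝ), u ≠ v →
    validState g (Function.update (Function.update s u tu) v tv) →
    ¬(util g s u < util g (Function.update (Function.update s u tu) v tv) u ∧
      util g s v < util g (Function.update (Function.update s u tu) v tv) v)

/-- Rewards at most proportional to the share `θ` of its budget that an endpoint invests, relative
to the reward when both endpoints invest their whole budgets. As every edge is listed in both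
directions, this bounds the reward by the share of either endpoint. Convex minimum effort rewards
have this property under uniform budgets, and rewards of class `C₀` under arbitrary ones. -/
def HasStarshapedRewards : Prop :=
  ∀ u v, g.Adj u v → ∀ θ ∈ Set.Icc (0 : ℝ) 1, ∀ y ∈ Set.Icc 0 (g.B v),
    g.f u v (θ * g.B u) y ≤ θ * g.f u v (g.B u) (g.B v)

end Definitions

section PriceOfAnarchy

variable {g : NCGame V} {s : V → V → ℝ} {u v : V}

theorem util_nonneg (hs : ∀ v u, 0 ≤ s v u) (v : V) : 0 ≤ util g s v := by
  classical
  exact sum_nonneg fun u _ ↦ ite_nonneg (g.f_nonneg _ _ _ _ (hs v u) (hs u v)) le_rfl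

theorem reward_le_util (hs : ∀ v u, 0 ≤ s v u) (huv : g.Adj u v) :
    g.f u v (s u v) (s v u) ≤ util g s u := by
  classical
  calc g.f u v (s u v) (s v u)
      = if g.Adj u v then g.f u v (s u v) (s v u) else 0 := (if_pos huv).symm
    _ ≤ util g s u :=
        single_le_sum (f := fun w ↦ if g.Adj u w then g.f u w (s u w) (s w u) else 0)
          (fun w _ ↦ ite_nonneg (g.f_nonneg _ _ _ _ (hs u w) (hs w u)) le_rfl) (mem_univ v)

namespace validState

theorem effort_mem_Icc (hs : validState g s) (u v : V) : s u v ∈ Set.Icc 0 (g.B u) :=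
  ⟨hs.1 u v, (single_le_sum (fun w _ ↦ hs.1 u w) (mem_univ v)).trans (hs.2.2 u)⟩

theorem share_nonneg (hs : validState g s) (u v : V) : 0 ≤ s u v / g.B u :=
  div_nonneg (hs.1 u v) (g.B_nonneg u)

theorem sum_share_le_one (hs : validState g s) (u : V) : ∑ v, s u v / g.B u ≤ 1 := by
  rw [← sum_div]
  exact div_le_one_of_le₀ (hs.2.2 u) (g.B_nonneg u)

-- At budget `0` the share is `0 / 0 = 0`, and the effort vanishes too.
theorem share_mul_budget (hs : validState g s) (u v : V) : s u v / g.B u * g.B u = s u v :=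
  div_mul_cancel_of_imp fun hB ↦ le_antisymm (hB ▸ (hs.effort_mem_Icc u v).2) (hs.1 u v)

theorem update_single (hs : validState g s) (huv : g.Adj u v) :
    validState g (Function.update s u (Pi.single v (g.B u))) := by
  obtain ⟨effort_nonneg, effort_eq_zero, sum_effort_le⟩ := hs
  have single_nonneg : 0 ≤ (Pi.single v (g.B u) : V → ℝ) := Pi.single_nonneg.2 (g.B_nonneg u)
  refine ⟨?_, ?_, ?_⟩
  · exact (Function.forall_update_iff s fun _ t ↦ ∀ w, 0 ≤ t w).2
      ⟨single_nonneg, fun x _ ↦ effort_nonneg x⟩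
  · refine (Function.forall_update_iff s fun x t ↦ ∀ w, ¬ g.Adj x w → t w = 0).2
      ⟨fun w huw ↦ ?_, fun x _ ↦ effort_eq_zero x⟩
    exact Pi.single_eq_of_ne (by rintro rfl; exact huw huv) _
  · exact (Function.forall_update_iff s fun x t ↦ ∑ w, t w ≤ g.B x).2
      ⟨(Fintype.sum_pi_single' v (g.B u)).le, fun x _ ↦ sum_effort_le x⟩

end validState

theorem IsPairwiseEq.isBilaterallyStable (hs : IsPairwiseEq g s) : IsBilaterallyStable g s :=
  ⟨hs.1.1, hs.2⟩

theorem IsBilaterallyStable.full_reward_le_util_or (hs : IsBilaterallyStable g s)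
    (huv : g.Adj u v) :
    g.f u v (g.B u) (g.B v) ≤ util g s u ∨ g.f u v (g.B u) (g.B v) ≤ util g s v := by
  have hne : u ≠ v := by
    rintro rfl
    exact g.adj_irrefl u huv
  have hvu : g.Adj v u := g.adj_symm u v huv
  set t := Function.update (Function.update s u (Pi.single v (g.B u))) v (Pi.single u (g.B v))
    with ht
  have t_valid : validState g t := (hs.1.update_single huv).update_single hvu
  have t_uv : t u v = g.B u := by simp [ht, hne]
  have t_vu : t v u = g.B v := by simp [ht]
  have le_util_u : g.f u v (g.B u) (g.B v) ≤ util g t u := by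
    simpa only [t_uv, t_vu] using reward_le_util t_valid.1 huv
  have le_util_v : g.f u v (g.B u) (g.B v) ≤ util g t v := by
    simpa only [t_uv, t_vu, g.f_comm v u, g.f_symm u v (g.B v)] using reward_le_util t_valid.1 hvu
  by_contra! improves
  exact hs.2 u v _ _ hne t_valid
    ⟨improves.1.trans_le le_util_u, improves.2.trans_le le_util_v⟩

namespace HasStarshapedRewards

variable {t : V → V → ℝ}

theorem reward_le_share_mul (hg : HasStarshapedRewards g) (ht : validState g t)
    (huv : g.Adj u v) :
    g.f u v (t u v) (t v u) ≤ t u v / g.B u * g.f u v (g.B u) (g.B v) := by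
  have share_le_one : t u v / g.B u ≤ 1 :=
    div_le_one_of_le₀ (ht.effort_mem_Icc u v).2 (g.B_nonneg u)
  simpa only [ht.share_mul_budget] using
    hg u v huv _ ⟨ht.share_nonneg u v, share_le_one⟩ _ (ht.effort_mem_Icc v u)

theorem reward_le_share_mul_swap (hg : HasStarshapedRewards g) (ht : validState g t)
    (huv : g.Adj u v) :
    g.f u v (t u v) (t v u) ≤ t v u / g.B v * g.f u v (g.B u) (g.B v) := by
  simpa only [g.f_comm v u, g.f_symm u v (t v u), g.f_symm u v (g.B v)] using
    hg.reward_le_share_mul ht (g.adj_symm u v huv)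

theorem reward_le_share_mul_util_add (hg : HasStarshapedRewards g)
    (hs : IsBilaterallyStable g s) (ht : validState g t) (huv : g.Adj u v) :
    g.f u v (t u v) (t v u) ≤
      t u v / g.B u * util g s u + t v u / g.B v * util g s v := by
  have share_mul_util_nonneg (x y : V) : 0 ≤ t x y / g.B x * util g s x :=
    mul_nonneg (ht.share_nonneg x y) (util_nonneg hs.1.1 x)
  rcases hs.full_reward_le_util_or huv with u_pays | v_pays
  · calc g.f u v (t u v) (t v u)
        ≤ t u v / g.B u * g.f u v (g.B u) (g.B v) := hg.reward_le_share_mul ht huv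
      _ ≤ t u v / g.B u * util g s u := mul_le_mul_of_nonneg_left u_pays (ht.share_nonneg u v)
      _ ≤ _ := le_add_of_nonneg_right (share_mul_util_nonneg v u)
  · calc g.f u v (t u v) (t v u)
        ≤ t v u / g.B v * g.f u v (g.B u) (g.B v) := hg.reward_le_share_mul_swap ht huv
      _ ≤ t v u / g.B v * util g s v := mul_le_mul_of_nonneg_left v_pays (ht.share_nonneg v u)
      _ ≤ _ := le_add_of_nonneg_left (share_mul_util_nonneg u v)

end HasStarshapedRewards

theorem hasStarshapedRewards_of_min_effort_convex {h : V → V → ℝ → ℝ}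
    (hB : ∀ u v, g.Adj u v → g.B u = g.B v)
    (hmin : ∀ u v, g.Adj u v → ∀ x y, g.f u v x y = h u v (min x y))
    (hmono : ∀ u v, g.Adj u v → MonotoneOn (h u v) (Set.Ici 0))
    (h0 : ∀ u v, g.Adj u v → h u v 0 = 0)
    (hconv : ∀ u v, g.Adj u v → ConvexOn ℝ (Set.Ici 0) (h u v)) :
    HasStarshapedRewards g := by
  rintro u v huv θ ⟨hθ₀, hθ₁⟩ y ⟨hy, -⟩
  have hθB : 0 ≤ θ * g.B u := mul_nonneg hθ₀ (g.B_nonneg u)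
  have h_smul_le : h u v (θ * g.B u) ≤ θ * h u v (g.B u) := by
    simpa [h0 u v huv] using
      (hconv u v huv).2 (Set.mem_Ici.2 (g.B_nonneg u)) Set.self_mem_Ici hθ₀
        (sub_nonneg.2 hθ₁) (add_sub_cancel θ 1)
  calc g.f u v (θ * g.B u) y
      = h u v (min (θ * g.B u) y) := hmin u v huv _ _
    _ ≤ h u v (θ * g.B u) := hmono u v huv (le_min hθB hy) hθB (min_le_left _ _)
    _ ≤ θ * h u v (g.B u) := h_smul_le
    _ = θ * g.f u v (g.B u) (g.B v) := by rw [hmin u v huv, ← hB u v huv, min_self]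

theorem min_effort_convex_uniform_poa_general (hg : HasStarshapedRewards g)
    (hs : IsBilaterallyStable g s) {t : V → V → ℝ} (ht : validState g t) :
    welfare g t ≤ 2 * welfare g s := by
  have util_s_nonneg : ∀ v, 0 ≤ util g s v := util_nonneg hs.1.1
  calc welfare g t
      ≤ ∑ u, ∑ v, (t u v / g.B u * util g s u + t v u / g.B v * util g s v) := by
        refine sum_le_sum fun u _ ↦ sum_le_sum fun v _ ↦ ?_
        split_ifs with huv
        · exact hg.reward_le_share_mul_util_add hs ht huv
        · exact add_nonneg (mul_nonneg (ht.share_nonneg u v) (util_s_nonneg u))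
            (mul_nonneg (ht.share_nonneg v u) (util_s_nonneg v))
    _ ≤ 2 * welfare g s :=
        sum_sum_mul_add_mul_swap_le_two_mul_sum ht.sum_share_le_one util_s_nonneg

end PriceOfAnarchy

/-- in minimum effort games with uniform budgets and convex
`h_e`, the price of anarchy for pairwise equilibria is at most 2. -/
theorem min_effort_convex_uniform_poa (g : NCGame V)
    (hB : ∀ v, g.B v = 1)
    (h : V → V → ℝ → ℝ)
    (hmin : ∀ u v, g.Adj u v → ∀ x y, g.f u v x y = h u v (min x y))
    (hmono : ∀ u v, g.Adj u v → MonotoneOn (h u v) (Set.Ici 0))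
    (h0 : ∀ u v, g.Adj u v → h u v 0 = 0)
    (hconv : ∀ u v, g.Adj u v → ConvexOn ℝ (Set.Ici 0) (h u v))
    (s : V → V → ℝ) (hs : IsPairwiseEq g s)
    (sStar : V → V → ℝ) (hStar : validState g sStar) :
    welfare g sStar ≤ 2 * welfare g s := by
  have hB_eq (u v : V) (_ : g.Adj u v) : g.B u = g.B v := (hB u).trans (hB v).symm
  exact min_effort_convex_uniform_poa_general
    (hasStarshapedRewards_of_min_effort_convex hB_eq hmin hmono h0 hconv)
    hs.isBilaterallyStable hStar
end

section
/- Consider a minimum effort game in which every function h_e is continuous and concave. Then a pairwise equilibrium exists. Moreover, if every h_e is strictly concave, the pairwise equilibrium is unique up to excess effort: for any two pairwise equilibria s and s' and every edge e = (u,v), min(s_u(e), s_v(e)) = min(s'_u(e), s'_v(e)). -/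
open Finset

variable {V : Type} [Fintype V] [DecidableEq V]

/-!
A pair deviation in a minimum effort game only pays off if both players raise the effort on their
common edge, paying for it with effort taken from their other edges. Hence pairwise equilibria are,
up to excess effort, the *stable allocations*: edge allocations in which every edge has an endpoint
that would not gain from such a change.

For integral efforts, a stable allocation is built greedily by repeatedly adding one unit to an edge
with the largest marginal reward among those whose endpoints both have budget left. When an endpoint
runs out of budget, concavity ensures that everything it has bought so far is worth at least as much
as what it could buy next. Refining the unit and taking a limit by compactness gives existence.

If two stable allocations differ, consider the edges where they disagree and the marginal reward at
the smaller of the two values. Stability at the edge where this is largest, together with strict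
concavity, yields another edge where it is larger still.
-/

section Concavity

variable {S : Set ℝ} {f : ℝ → ℝ} {y z δ : ℝ}

lemma exists_swapped_weights (hyz : y < z) (hδ : 0 < δ) :
    ∃ a b : ℝ, 0 < a ∧ 0 < b ∧ a + b = 1 ∧
      a * y + b * (z + δ) = z ∧ b * y + a * (z + δ) = y + δ := by
  have hL : 0 < z - y + δ := by linarith
  refine ⟨δ / (z - y + δ), (z - y) / (z - y + δ), div_pos hδ hL, div_pos (sub_pos.2 hyz) hL,
    ?_, ?_, ?_⟩ <;> field_simp <;> ring

lemma increment_le_of_concaveOn (hf : ConcaveOn ℝ S f) (hy : y ∈ S) (hz : z + δ ∈ S)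
    (hyz : y ≤ z) (hδ : 0 ≤ δ) : f (z + δ) - f z ≤ f (y + δ) - f y := by
  rcases hyz.eq_or_lt with rfl | hyz
  · exact le_rfl
  rcases hδ.eq_or_lt with rfl | hδ
  · simp
  obtain ⟨a, b, ha, hb, hab, hz_eq, hy_eq⟩ := exists_swapped_weights hyz hδ
  have hfz := hf.2 hy hz ha.le hb.le hab
  have hfy := hf.2 hy hz hb.le ha.le (by rwa [add_comm])
  simp only [smul_eq_mul, hz_eq, hy_eq] at hfz hfy
  linear_combination hfz + hfy - (f y + f (z + δ)) * hab

lemma increment_lt_of_strictConcaveOn (hf : StrictConcaveOn ℝ S f) (hy : y ∈ S) (hz : z + δ ∈ S)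
    (hyz : y < z) (hδ : 0 < δ) : f (z + δ) - f z < f (y + δ) - f y := by
  obtain ⟨a, b, ha, hb, hab, hz_eq, hy_eq⟩ := exists_swapped_weights hyz hδ
  have hne : y ≠ z + δ := by linarith
  have hfz := hf.2 hy hz hne ha hb hab
  have hfy := hf.2 hy hz hne hb ha (by rwa [add_comm])
  simp only [smul_eq_mul, hz_eq, hy_eq] at hfz hfy
  linear_combination hfz + hfy - (f y + f (z + δ)) * hab

lemma strictMonoOn_of_strictConcaveOn (hf : StrictConcaveOn ℝ S f) (hmono : MonotoneOn f S) :
    StrictMonoOn f S := by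
  intro y hy z hz hyz
  have hhalf : (0 : ℝ) < 1 / 2 := by norm_num
  have hmid := hf.2 hy hz hyz.ne hhalf hhalf (add_halves 1)
  have hmid_le := hmono (hf.1 hy hz hhalf.le hhalf.le (add_halves 1)) hz
    (by simp only [smul_eq_mul]; linarith)
  simp only [smul_eq_mul] at hmid hmid_le
  linarith [hmono hy hz hyz.le]

lemma antitone_fwdDiff_of_concaveOn (hf : ConcaveOn ℝ (Set.Ici 0) f) {c : ℝ} (hc : 0 < c) :
    Antitone (fwdDiff 1 fun j : ℕ => f (j / c)) := by
  intro i j hij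
  simp only [fwdDiff, Nat.cast_add, Nat.cast_one, add_div]
  exact increment_le_of_concaveOn hf (Set.mem_Ici.2 (by positivity))
    (Set.mem_Ici.2 (by positivity)) (by gcongr) (by positivity)

end Concavity

section FwdDiff

variable {f : ℕ → ℝ} {D : ℝ} {k m : ℕ}

lemma sub_le_mul_of_le_fwdDiff (hmk : m ≤ k) (hD : ∀ j < k, D ≤ fwdDiff 1 f j) :
    f m - f k ≤ D * (m - k) := by
  induction k, hmk using Nat.le_induction with
  | base => simp
  | succ k _ ih =>
    have hstep : D ≤ f (k + 1) - f k := hD k k.lt_succ_self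
    have hrest := ih fun j hj => hD j (hj.trans k.lt_succ_self)
    push_cast
    linarith

lemma sub_le_mul_of_fwdDiff_le (hkm : k ≤ m) (hD : ∀ j, k ≤ j → fwdDiff 1 f j ≤ D) :
    f m - f k ≤ D * (m - k) := by
  induction m, hkm using Nat.le_induction with
  | base => simp
  | succ m hkm ih =>
    have hstep : f (m + 1) - f m ≤ D := hD m hkm
    push_cast
    linarith

end FwdDiff

variable {ι : Type*}

section SinglePlayer

variable [Fintype ι]

/-- No gain through `u`: a player with budget `b`, rewards `φ w` and efforts `y w` cannot improve by
changing the effort on `u` arbitrarily and decreasing the efforts on the other edges. Efforts are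
taken in a general ordered monoid so as to cover both integral and real efforts. -/
def IsOptimalVia {R : Type*} [AddCommMonoid R] [LE R]
    (φ : ι → R → ℝ) (b : R) (y : ι → R) (u : ι) : Prop :=
  ∀ t : ι → R, (∀ w, 0 ≤ t w) → ∑ w, t w ≤ b → (∀ w, w ≠ u → t w ≤ y w) →
    ∑ w, φ w (t w) ≤ ∑ w, φ w (y w)

/-- The greedy certificate for integral optimality: the budget `n` is spent, and every unit bought
is worth at least as much as one more unit on `u`. -/
def IsSaturatedVia (φ : ι → ℕ → ℝ) (n : ℕ) (k : ι → ℕ) (u : ι) : Prop :=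
  ∑ w, k w = n ∧ ∀ w, ∀ j < k w, fwdDiff 1 (φ u) (k u) ≤ fwdDiff 1 (φ w) j

lemma IsSaturatedVia.isOptimalVia {φ : ι → ℕ → ℝ} {n : ℕ} {k : ι → ℕ} {u : ι}
    (hk : IsSaturatedVia φ n k u) (hmono : Monotone (φ u)) (hconc : Antitone (fwdDiff 1 (φ u))) :
    IsOptimalVia φ n k u := by
  intro m _ hmn hmk
  set D := fwdDiff 1 (φ u) (k u)
  have hD : 0 ≤ D := sub_nonneg.2 (hmono (Nat.le_succ _))
  have hterm : ∀ w, φ w (m w) - φ w (k w) ≤ D * (m w - k w) := by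
    intro w
    by_cases hle : m w ≤ k w
    · exact sub_le_mul_of_le_fwdDiff hle (hk.2 w)
    · obtain rfl : w = u := by_contra fun hwu => hle (hmk w hwu)
      exact sub_le_mul_of_fwdDiff_le (not_le.1 hle).le fun j hj => hconc hj
  have hbudget : ∑ w, (m w : ℝ) ≤ ∑ w, (k w : ℝ) := by exact_mod_cast hmn.trans_eq hk.1.symm
  refine sub_nonpos.1 ?_
  calc ∑ w, φ w (m w) - ∑ w, φ w (k w) = ∑ w, (φ w (m w) - φ w (k w)) :=
        (sum_sub_distrib ..).symm
    _ ≤ ∑ w, D * ((m w : ℝ) - k w) := sum_le_sum fun w _ => hterm w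
    _ = D * (∑ w, (m w : ℝ) - ∑ w, (k w : ℝ)) := by rw [← mul_sum, sum_sub_distrib]
    _ ≤ 0 := mul_nonpos_of_nonneg_of_nonpos hD (sub_nonpos.2 hbudget)

lemma sum_floor_mul_le_floor_mul {t : ι → ℝ} {b c : ℝ} (ht : ∀ w, 0 ≤ t w) (htb : ∑ w, t w ≤ b)
    (hc : 0 ≤ c) : ∑ w, ⌊t w * c⌋₊ ≤ ⌊b * c⌋₊ := by
  refine Nat.le_floor ?_
  calc ((∑ w, ⌊t w * c⌋₊ : ℕ) : ℝ) = ∑ w, (⌊t w * c⌋₊ : ℝ) := by push_cast; rfl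
    _ ≤ ∑ w, t w * c := sum_le_sum fun w _ => Nat.floor_le (mul_nonneg (ht w) hc)
    _ = (∑ w, t w) * c := (sum_mul ..).symm
    _ ≤ b * c := mul_le_mul_of_nonneg_right htb hc

open Filter Topology

lemma tendsto_sum_of_continuousOn_Ici {α : Type*} {l : Filter α} {φ : ι → ℝ → ℝ}
    (hφ : ∀ w, ContinuousOn (φ w) (Set.Ici 0)) {q : α → ι → ℝ} {a : ι → ℝ} (ha : ∀ w, 0 ≤ a w)
    (hq : ∀ᶠ i in l, ∀ w, 0 ≤ q i w) (hqa : ∀ w, Tendsto (fun i => q i w) l (𝓝 (a w))) :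
    Tendsto (fun i => ∑ w, φ w (q i w)) l (𝓝 (∑ w, φ w (a w))) :=
  tendsto_finsetSum _ fun w _ => (hφ w (a w) (ha w)).tendsto.comp
    (tendsto_nhdsWithin_iff.2 ⟨hqa w, hq.mono fun _ hi => hi w⟩)

lemma isOptimalVia_of_tendsto {α : Type*} {l : Filter α} [l.NeBot] {φ : ι → ℝ → ℝ}
    (hφ : ∀ w, ContinuousOn (φ w) (Set.Ici 0)) {b : ℝ} {u : ι} {c : α → ℝ}
    (hc : Tendsto c l atTop) {k : α → ι → ℕ} {y : ι → ℝ}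
    (hky : ∀ w, Tendsto (fun i => k i w / c i) l (𝓝 (y w)))
    (hopt : ∀ᶠ i in l, IsOptimalVia (fun w (j : ℕ) => φ w (j / c i)) ⌊b * c i⌋₊ (k i) u) :
    IsOptimalVia φ b y u := by
  classical
  intro t ht htb hty
  have hc0 : ∀ᶠ i in l, 0 ≤ c i := hc.eventually_ge_atTop 0
  have hy : ∀ w, 0 ≤ y w := fun w =>
    ge_of_tendsto (hky w) (hc0.mono fun i hi => div_nonneg (k i w).cast_nonneg hi)
  let m : α → ι → ℕ := fun i w => if w = u then ⌊t w * c i⌋₊ else min ⌊t w * c i⌋₊ (k i w)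
  have hmt : ∀ w, Tendsto (fun i => m i w / c i) l (𝓝 (t w)) := by
    intro w
    have hfloor := (tendsto_nat_floor_mul_div_atTop (ht w)).comp hc
    by_cases hwu : w = u
    · simpa only [m, if_pos hwu, Function.comp_def] using hfloor
    · rw [← min_eq_left (hty w hwu)]
      refine (hfloor.min (hky w)).congr' (hc0.mono fun i hi => ?_)
      simp only [m, if_neg hwu, Nat.cast_min, Function.comp_apply, min_div_div_right hi]
  refine le_of_tendsto_of_tendsto
    (tendsto_sum_of_continuousOn_Ici hφ ht
      (hc0.mono fun i hi w => div_nonneg (m i w).cast_nonneg hi) hmt)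
    (tendsto_sum_of_continuousOn_Ici hφ hy
      (hc0.mono fun i hi w => div_nonneg (k i w).cast_nonneg hi) hky) ?_
  filter_upwards [hopt, hc0] with i hi hci
  refine hi (m i) (fun w => Nat.zero_le _) ?_ fun w hwu => ?_
  · refine (sum_le_sum fun w _ => ?_).trans (sum_floor_mul_le_floor_mul ht htb hci)
    simp only [m]
    split_ifs
    exacts [le_rfl, min_le_left _ _]
  · simpa only [m, if_neg hwu] using min_le_right _ _

variable {φ : ι → ℝ → ℝ} {b : ℝ} {y : ι → ℝ} {u : ι}

lemma isOptimalVia_of_eq_zero (hφ : ∀ w, MonotoneOn (φ w) (Set.Ici 0)) (hy : ∀ w, 0 ≤ y w)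
    (hu : φ u = 0) : IsOptimalVia φ b y u := by
  intro t ht _ hty
  refine sum_le_sum fun w _ => ?_
  by_cases hwu : w = u
  · simp [hwu, hu]
  · exact hφ w (ht w) (hy w) (hty w hwu)

lemma IsOptimalVia.sum_eq (hopt : IsOptimalVia φ b y u) (hφ : StrictMonoOn (φ u) (Set.Ici 0))
    (hy : ∀ w, 0 ≤ y w) (hyb : ∑ w, y w ≤ b) : ∑ w, y w = b := by
  classical
  refine hyb.eq_of_not_lt fun hslack => ?_
  let r := b - ∑ w, y w
  have hr : 0 < r := sub_pos.2 hslack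
  have hle := hopt (y + Pi.single u r) (fun w => add_nonneg (hy w) ?_) ?_ fun w hwu => ?_
  · refine hle.not_gt (sum_lt_sum (fun w _ => ?_) ⟨u, mem_univ u, ?_⟩)
    · by_cases hwu : w = u
      · subst hwu
        exact hφ.monotoneOn (hy w) (add_nonneg (hy w) (by simpa using hr.le)) (by simpa using hr.le)
      · simp [hwu]
    · exact hφ (hy u) (add_nonneg (hy u) (by simpa using hr.le)) (by simpa using hr)
  · exact (Pi.single_nonneg.2 hr.le : (0 : ι → ℝ) ≤ Pi.single u r) w
  · simp [sum_add_distrib, r]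
  · simp [hwu]

lemma sum_apply_transfer [DecidableEq ι] (ψ : ι → ℝ → ℝ) (y : ι → ℝ) {u w : ι} (hwu : w ≠ u)
    (δ : ℝ) : ∑ z, ψ z ((y + Pi.single u δ - Pi.single w δ : ι → ℝ) z) =
      ∑ z, ψ z (y z) + (ψ u (y u + δ) - ψ u (y u)) - (ψ w (y w) - ψ w (y w - δ)) := by
  have hterm : ∀ z, ψ z ((y + Pi.single u δ - Pi.single w δ : ι → ℝ) z) =
      ψ z (y z) + (if z = u then ψ u (y u + δ) - ψ u (y u) else 0) -
        (if z = w then ψ w (y w) - ψ w (y w - δ) else 0) := by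
    intro z
    rcases eq_or_ne z u with rfl | hzu
    · simp [hwu.symm]
    rcases eq_or_ne z w with rfl | hzw
    · simp [hzu]
    · simp [hzu, hzw]
  simp only [hterm, sum_add_distrib, sum_sub_distrib, sum_ite_eq', mem_univ, if_true]

lemma IsOptimalVia.increment_le_decrement (hopt : IsOptimalVia φ b y u) (hy : ∀ w, 0 ≤ y w)
    (hyb : ∑ w, y w ≤ b) {w : ι} (hwu : w ≠ u) {δ : ℝ} (hδ : 0 ≤ δ) (hδw : δ ≤ y w) :
    φ u (y u + δ) - φ u (y u) ≤ φ w (y w) - φ w (y w - δ) := by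
  classical
  have hle := hopt (y + Pi.single u δ - Pi.single w δ) (fun z => ?_) ?_ fun z hzu => ?_
  · rw [sum_apply_transfer φ y hwu] at hle
    linarith
  · have hsingle : 0 ≤ (Pi.single u δ : ι → ℝ) := Pi.single_nonneg.2 hδ
    rcases eq_or_ne z w with rfl | hzw
    · simp [hwu, hδw]
    · simpa [hzw] using add_nonneg (hy z) (hsingle z)
  · have hsum := sum_apply_transfer (fun _ => id) y hwu δ
    simp only [id, add_sub_cancel_left, sub_sub_cancel, add_sub_cancel_right] at hsum
    exact hsum.trans_le hyb
  · have hsingle : 0 ≤ (Pi.single w δ : ι → ℝ) := Pi.single_nonneg.2 hδ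
    simpa [hzu] using hsingle z

lemma IsOptimalVia.exists_increment_lt (hopt : IsOptimalVia φ b y u)
    (hmono : StrictMonoOn (φ u) (Set.Ici 0))
    (hconc : ∀ w, 0 < y w → StrictConcaveOn ℝ (Set.Ici 0) (φ w)) (hy : ∀ w, 0 ≤ y w)
    (hyb : ∑ w, y w ≤ b) {t : ι → ℝ} (ht : ∀ w, 0 ≤ t w) (htb : ∑ w, t w ≤ b) (hlt : y u < t u)
    {δ : ℝ} (hδ : 0 < δ) (hsep : ∀ w, t w < y w → δ < y w - t w) :
    ∃ w, t w < y w ∧ φ u (y u + δ) - φ u (y u) < φ w (t w + δ) - φ w (t w) := by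
  have hsum : ∑ w, t w ≤ ∑ w, y w := htb.trans_eq (hopt.sum_eq hmono hy hyb).symm
  obtain ⟨w, hw⟩ : ∃ w, t w < y w := by
    by_contra! hle
    exact hsum.not_gt (sum_lt_sum (fun w _ => hle w) ⟨u, mem_univ u, hlt⟩)
  have hgap := hsep w hw
  have hwu : w ≠ u := by rintro rfl; exact hw.not_gt hlt
  refine ⟨w, hw, ?_⟩
  calc φ u (y u + δ) - φ u (y u)
      ≤ φ w (y w) - φ w (y w - δ) :=
        hopt.increment_le_decrement hy hyb hwu hδ.le (by linarith [ht w])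
    _ = φ w (y w - δ + δ) - φ w (y w - δ) := by rw [sub_add_cancel]
    _ < φ w (t w + δ) - φ w (t w) :=
        increment_lt_of_strictConcaveOn (hconc w ((ht w).trans_lt hw)) (ht w)
          (by simpa using hy w) (by linarith) hδ

/-- Moving only part of the way towards an improving deviation still improves, by concavity; so the
increase on `u` may be any sufficiently small amount. -/
lemma eventually_exists_improvement (hmono : ∀ w, MonotoneOn (φ w) (Set.Ici 0))
    (hconc : ∀ w, ConcaveOn ℝ (Set.Ici 0) (φ w)) (hy : ∀ w, 0 ≤ y w) (hyb : ∑ w, y w ≤ b)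
    (hopt : ¬ IsOptimalVia φ b y u) :
    ∀ᶠ d in 𝓝[>] (0 : ℝ), ∃ r : ι → ℝ, (∀ w, 0 ≤ r w) ∧ ∑ w, r w ≤ b ∧ r u = y u + d ∧
      (∀ w, w ≠ u → r w ≤ y w) ∧ ∑ w, φ w (y w) < ∑ w, φ w (r w) := by
  simp only [IsOptimalVia, not_forall, not_le] at hopt
  obtain ⟨t, ht, htb, hty, hlt⟩ := hopt
  have hgap : 0 < t u - y u := by
    refine sub_pos.2 (lt_of_not_ge fun hle => hlt.not_ge (sum_le_sum fun w _ => ?_))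
    refine hmono w (ht w) (hy w) ?_
    by_cases hwu : w = u
    · rwa [hwu]
    · exact hty w hwu
  filter_upwards [Ioo_mem_nhdsGT hgap] with d hd
  obtain ⟨θ, hθ0, hθ1, hθd⟩ : ∃ θ : ℝ, 0 < θ ∧ θ < 1 ∧ θ * (t u - y u) = d :=
    ⟨d / (t u - y u), div_pos hd.1 hgap, (div_lt_one hgap).2 hd.2, div_mul_cancel₀ _ hgap.ne'⟩
  have hθ' : 0 < 1 - θ := sub_pos.2 hθ1
  refine ⟨fun w => (1 - θ) * y w + θ * t w, fun w => ?_, ?_, ?_, fun w hwu => ?_, ?_⟩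
  · exact add_nonneg (mul_nonneg hθ'.le (hy w)) (mul_nonneg hθ0.le (ht w))
  · rw [sum_add_distrib, ← mul_sum, ← mul_sum]
    linear_combination (1 - θ) * hyb + θ * htb
  · linear_combination hθd
  · linear_combination θ * hty w hwu
  · calc ∑ w, φ w (y w) < (1 - θ) * ∑ w, φ w (y w) + θ * ∑ w, φ w (t w) := by
          linear_combination θ * hlt
      _ = ∑ w, ((1 - θ) * φ w (y w) + θ * φ w (t w)) := by
          rw [sum_add_distrib, ← mul_sum, ← mul_sum]
      _ ≤ ∑ w, φ w ((1 - θ) * y w + θ * t w) := sum_le_sum fun w _ =>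
          (hconc w).2 (hy w) (ht w) hθ'.le hθ0.le (sub_add_cancel 1 θ)

end SinglePlayer

section Allocation

variable [Fintype ι]

/-- A common effort `x u v` of both endpoints on each edge of `G`, within the budgets `B`. As for
`IsOptimalVia`, efforts may be integral or real. -/
structure IsAllocation {R : Type*} [AddCommMonoid R] [LE R] (G : SimpleGraph ι) (B : ι → R)
    (x : ι → ι → R) : Prop where
  symm : ∀ u v, x u v = x v u
  nonneg : ∀ u v, 0 ≤ x u v
  eq_zero : ∀ u v, ¬ G.Adj u v → x u v = 0
  sum_le : ∀ v, ∑ w, x v w ≤ B v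

/-- An allocation in which every edge has an endpoint that does not gain through this edge. These
are the pairwise equilibria of minimum effort games, stripped of excess effort. -/
structure IsStableAllocation {R : Type*} [AddCommMonoid R] [LE R] (G : SimpleGraph ι) (B : ι → R)
    (κ : ι → ι → R → ℝ) (x : ι → ι → R) : Prop extends IsAllocation G B x where
  isOptimalVia_or : ∀ u v, G.Adj u v →
    IsOptimalVia (κ u) (B u) (x u) v ∨ IsOptimalVia (κ v) (B v) (x v) u

variable {G : SimpleGraph ι}

lemma IsAllocation.apply_le {R : Type*} [AddCommMonoid R] [PartialOrder R] [IsOrderedAddMonoid R]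
    {B : ι → R} {x : ι → ι → R} (hx : IsAllocation G B x) (v w : ι) : x v w ≤ B v :=
  (single_le_sum (fun z _ => hx.nonneg v z) (mem_univ w)).trans (hx.sum_le v)

lemma IsAllocation.div_of_floor {B : ι → ℝ} (hB : ∀ v, 0 ≤ B v) {c : ℝ} (hc : 0 < c)
    {k : ι → ι → ℕ} (hk : IsAllocation G (fun v => ⌊B v * c⌋₊) k) :
    IsAllocation G B fun u v => k u v / c where
  symm u v := by rw [hk.symm]
  nonneg u v := by positivity
  eq_zero u v huv := by simp [hk.eq_zero u v huv]
  sum_le v := by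
    rw [← sum_div, div_le_iff₀ hc]
    exact_mod_cast (Nat.le_floor_iff (mul_nonneg (hB v) hc.le)).1 (hk.sum_le v)

lemma isClosed_setOf_isAllocation (G : SimpleGraph ι) (B : ι → ℝ) :
    IsClosed {x | IsAllocation G B x} := by
  have hset : {x | IsAllocation G B x} = {x | (∀ u v, x u v = x v u) ∧ (∀ u v, 0 ≤ x u v) ∧
      (∀ u v, ¬ G.Adj u v → x u v = 0) ∧ ∀ v, ∑ w, x v w ≤ B v} :=
    Set.ext fun _ => ⟨fun hx => ⟨hx.symm, hx.nonneg, hx.eq_zero, hx.sum_le⟩,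
      fun ⟨hsymm, hnonneg, hzero, hsum⟩ => ⟨hsymm, hnonneg, hzero, hsum⟩⟩
  simp only [hset, Set.ofPred_and, Set.ofPred_forall]
  refine .inter ?_ (.inter ?_ (.inter ?_ ?_))
  · exact isClosed_iInter fun u => isClosed_iInter fun v =>
      isClosed_eq (by fun_prop) (by fun_prop)
  · exact isClosed_iInter fun u => isClosed_iInter fun v =>
      isClosed_le (by fun_prop) (by fun_prop)
  · exact isClosed_iInter fun u => isClosed_iInter fun v => isClosed_iInter fun _ =>
      isClosed_eq (by fun_prop) (by fun_prop)
  · exact isClosed_iInter fun v => isClosed_le (by fun_prop) (by fun_prop)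

lemma isCompact_setOf_isAllocation (G : SimpleGraph ι) (B : ι → ℝ) :
    IsCompact {x | IsAllocation G B x} :=
  (isCompact_Icc (a := 0) (b := fun v _ => B v)).of_isClosed_subset
    (isClosed_setOf_isAllocation G B) fun _ hx => ⟨hx.nonneg, hx.apply_le⟩

end Allocation

section BumpEdge

variable [DecidableEq ι] {k : ι → ι → ℕ} {a b : ι}

/-- One step of the greedy procedure: one more unit of effort on the edge `ab`, from both ends. -/
def bumpEdge (k : ι → ι → ℕ) (a b : ι) : ι → ι → ℕ :=
  fun u v => k u v + if s(u, v) = s(a, b) then 1 else 0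

lemma le_bumpEdge (k : ι → ι → ℕ) (a b : ι) : k ≤ bumpEdge k a b :=
  fun _ _ => Nat.le_add_right _ _

lemma bumpEdge_apply_self (k : ι → ι → ℕ) (a b : ι) : bumpEdge k a b a b = k a b + 1 := by
  simp [bumpEdge]

lemma bumpEdge_of_ne {v : ι} (hva : v ≠ a) (hvb : v ≠ b) : bumpEdge k a b v = k v := by
  ext w
  simp [bumpEdge, hva, hvb]

lemma lt_or_eq_of_lt_bumpEdge {u v : ι} {j : ℕ} (hj : j < bumpEdge k a b u v) :
    j < k u v ∨ s(u, v) = s(a, b) ∧ j = k u v := by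
  unfold bumpEdge at hj
  split_ifs at hj with huv
  · exact (Nat.lt_succ_iff_lt_or_eq.1 hj).imp_right fun hj => ⟨huv, hj⟩
  · exact .inl hj

lemma sum_bumpEdge [Fintype ι] (hab : a ≠ b) (v : ι) :
    ∑ w, bumpEdge k a b v w = ∑ w, k v w + if v = a ∨ v = b then 1 else 0 := by
  simp only [bumpEdge, sum_add_distrib]
  congr 1
  rcases eq_or_ne v a with rfl | hva
  · simp [hab]
  rcases eq_or_ne v b with rfl | hvb
  · simp [hva]
  · simp [hva, hvb]

lemma IsAllocation.bumpEdge [Fintype ι] {G : SimpleGraph ι} {n : ι → ℕ}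
    (hk : IsAllocation G n k) (hab : G.Adj a b) (ha : ∑ w, k a w < n a) (hb : ∑ w, k b w < n b) :
    IsAllocation G n (bumpEdge k a b) where
  symm u v := by simp only [_root_.bumpEdge, hk.symm u v, Sym2.eq_swap (a := u)]
  nonneg u v := Nat.zero_le _
  eq_zero u v huv := by
    have hne : s(u, v) ≠ s(a, b) := fun h => huv (G.adj_congr_of_sym2 h |>.2 hab)
    simp [_root_.bumpEdge, hk.eq_zero u v huv, hne]
  sum_le v := by
    rw [sum_bumpEdge hab.ne]
    split_ifs with hv
    · rcases hv with rfl | rfl <;> assumption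
    · exact hk.sum_le v

end BumpEdge

section Greedy

variable [Fintype ι] {G : SimpleGraph ι} {n : ι → ℕ} {κ : ι → ι → ℕ → ℝ} {k : ι → ι → ℕ} {a b : ι}

/-- The invariant of the greedy procedure: one more unit on an edge that is not yet blocked by a
saturated endpoint is worth at most as much as each unit spent so far anywhere in the graph. -/
structure IsGreedyAllocation (G : SimpleGraph ι) (n : ι → ℕ) (κ : ι → ι → ℕ → ℝ)
    (k : ι → ι → ℕ) : Prop extends IsAllocation G n k where
  fwdDiff_le : ∀ u v, G.Adj u v → ¬ IsSaturatedVia (κ u) (n u) (k u) v →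
    ¬ IsSaturatedVia (κ v) (n v) (k v) u →
    ∀ w z, ∀ j < k w z, fwdDiff 1 (κ u v) (k u v) ≤ fwdDiff 1 (κ w z) j

lemma isGreedyAllocation_zero : IsGreedyAllocation G n κ 0 where
  symm _ _ := rfl
  nonneg _ _ := le_rfl
  eq_zero _ _ _ := rfl
  sum_le _ := by simp
  fwdDiff_le _ _ _ _ _ _ _ _ hj := absurd hj (Nat.not_lt_zero _)

lemma IsGreedyAllocation.sum_lt (hk : IsGreedyAllocation G n κ k) {u v : ι} (huv : G.Adj u v)
    (hu : ¬ IsSaturatedVia (κ u) (n u) (k u) v) (hv : ¬ IsSaturatedVia (κ v) (n v) (k v) u) :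
    ∑ w, k u w < n u :=
  (hk.sum_le u).lt_of_ne fun hfull => hu ⟨hfull, hk.fwdDiff_le u v huv hu hv u⟩

lemma IsSaturatedVia.bumpEdge [DecidableEq ι] (ha : ∑ w, k a w < n a) (hb : ∑ w, k b w < n b)
    {u v : ι} (hu : IsSaturatedVia (κ u) (n u) (k u) v) :
    IsSaturatedVia (κ u) (n u) (bumpEdge k a b u) v := by
  have hua : u ≠ a := by rintro rfl; exact ha.ne hu.1
  have hub : u ≠ b := by rintro rfl; exact hb.ne hu.1
  rwa [bumpEdge_of_ne hua hub]

lemma IsGreedyAllocation.bumpEdge [DecidableEq ι] (hk : IsGreedyAllocation G n κ k)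
    (hsymm : ∀ u v, κ u v = κ v u) (hconc : ∀ u v, Antitone (fwdDiff 1 (κ u v)))
    (hab : G.Adj a b) (ha : ∑ w, k a w < n a) (hb : ∑ w, k b w < n b)
    (hmax : ∀ u v, G.Adj u v → ∑ w, k u w < n u → ∑ w, k v w < n v →
      fwdDiff 1 (κ u v) (k u v) ≤ fwdDiff 1 (κ a b) (k a b)) :
    IsGreedyAllocation G n κ (bumpEdge k a b) where
  toIsAllocation := hk.toIsAllocation.bumpEdge hab ha hb
  fwdDiff_le u v huv hu hv w z j hj := by
    have hu : ¬ IsSaturatedVia (κ u) (n u) (k u) v := mt (.bumpEdge ha hb) hu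
    have hv : ¬ IsSaturatedVia (κ v) (n v) (k v) u := mt (.bumpEdge ha hb) hv
    refine (hconc u v (le_bumpEdge k a b u v)).trans ?_
    rcases lt_or_eq_of_lt_bumpEdge hj with hj | ⟨hwz, rfl⟩
    · exact hk.fwdDiff_le u v huv hu hv w z j hj
    · have hle := hmax u v huv (hk.sum_lt huv hu hv) (hk.sum_lt huv.symm hv hu)
      rcases Sym2.eq_iff.1 hwz with ⟨rfl, rfl⟩ | ⟨rfl, rfl⟩
      · exact hle
      · rwa [hsymm w z, hk.symm w z]

lemma IsGreedyAllocation.isSaturatedVia_or_of_maximal (hsymm : ∀ u v, κ u v = κ v u)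
    (hconc : ∀ u v, Antitone (fwdDiff 1 (κ u v)))
    (hk : Maximal (IsGreedyAllocation G n κ) k) {u v : ι} (huv : G.Adj u v) :
    IsSaturatedVia (κ u) (n u) (k u) v ∨ IsSaturatedVia (κ v) (n v) (k v) u := by
  classical
  by_contra! hblocked
  let slackEdges : Finset (ι × ι) :=
    {p | G.Adj p.1 p.2 ∧ ∑ w, k p.1 w < n p.1 ∧ ∑ w, k p.2 w < n p.2}
  have huv_mem : (u, v) ∈ slackEdges := by
    simpa [slackEdges] using ⟨huv, hk.prop.sum_lt huv hblocked.1 hblocked.2,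
      hk.prop.sum_lt huv.symm hblocked.2 hblocked.1⟩
  obtain ⟨⟨a, b⟩, hab_mem, hmax⟩ := slackEdges.exists_max_image
    (fun p => fwdDiff 1 (κ p.1 p.2) (k p.1 p.2)) ⟨_, huv_mem⟩
  obtain ⟨hab, ha, hb⟩ : G.Adj a b ∧ ∑ w, k a w < n a ∧ ∑ w, k b w < n b := by
    simpa [slackEdges] using hab_mem
  have hbump : IsGreedyAllocation G n κ (_root_.bumpEdge k a b) :=
    hk.prop.bumpEdge hsymm hconc hab ha hb fun w z hwz hw hz =>
      hmax (w, z) (by simpa [slackEdges] using ⟨hwz, hw, hz⟩)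
  have hle := hk.le_of_ge hbump (le_bumpEdge k a b) a b
  rw [bumpEdge_apply_self] at hle
  exact Nat.not_succ_le_self _ hle

lemma exists_maximal_isGreedyAllocation (G : SimpleGraph ι) (n : ι → ℕ) (κ : ι → ι → ℕ → ℝ) :
    ∃ k, Maximal (IsGreedyAllocation G n κ) k := by
  classical
  have hfin : {k | IsGreedyAllocation G n κ k}.Finite :=
    (Set.finite_Iic (fun v _ => n v : ι → ι → ℕ)).subset fun _ hk => hk.apply_le
  obtain ⟨k, -, hk⟩ := hfin.exists_le_maximal isGreedyAllocation_zero
  exact ⟨k, hk⟩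

end Greedy

section Existence

variable [Fintype ι]

open Filter Topology

theorem exists_isStableAllocation_nat (G : SimpleGraph ι) (n : ι → ℕ) {κ : ι → ι → ℕ → ℝ}
    (hsymm : ∀ u v, κ u v = κ v u) (hmono : ∀ u v, Monotone (κ u v))
    (hconc : ∀ u v, Antitone (fwdDiff 1 (κ u v))) : ∃ k, IsStableAllocation G n κ k := by
  obtain ⟨k, hk⟩ := exists_maximal_isGreedyAllocation G n κ
  refine ⟨k, hk.prop.toIsAllocation, fun u v huv => ?_⟩
  exact (IsGreedyAllocation.isSaturatedVia_or_of_maximal hsymm hconc hk huv).imp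
    (fun hu => hu.isOptimalVia (hmono u v) (hconc u v))
    (fun hv => hv.isOptimalVia (hmono v u) (hconc v u))

theorem exists_isStableAllocation (G : SimpleGraph ι) {B : ι → ℝ} (hB : ∀ v, 0 ≤ B v)
    {κ : ι → ι → ℝ → ℝ} (hsymm : ∀ u v, κ u v = κ v u)
    (hmono : ∀ u v, MonotoneOn (κ u v) (Set.Ici 0))
    (hconc : ∀ u v, ConcaveOn ℝ (Set.Ici 0) (κ u v))
    (hcont : ∀ u v, ContinuousOn (κ u v) (Set.Ici 0)) : ∃ x, IsStableAllocation G B κ x := by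
  let c : ℕ → ℝ := fun N => N + 1
  have hc : ∀ N, 0 < c N := fun N => N.cast_add_one_pos
  have hmono_mesh : ∀ N u v, Monotone fun j : ℕ => κ u v (j / c N) := fun N u v i j hij =>
    hmono u v (div_nonneg i.cast_nonneg (hc N).le) (div_nonneg j.cast_nonneg (hc N).le)
      (div_le_div_of_nonneg_right (Nat.cast_le.2 hij) (hc N).le)
  choose k hk using fun N => exists_isStableAllocation_nat G (fun v => ⌊B v * c N⌋₊)
    (κ := fun u v j => κ u v (j / c N)) (fun u v => by rw [hsymm]) (hmono_mesh N)
    (fun u v => antitone_fwdDiff_of_concaveOn (hconc u v) (hc N))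
  have hc_lim : Tendsto c (hyperfilter ℕ) atTop :=
    (tendsto_natCast_atTop_atTop.atTop_add tendsto_const_nhds).mono_left Nat.hyperfilter_le_atTop
  obtain ⟨x, hx, hlim⟩ := (isCompact_setOf_isAllocation G B).ultrafilter_le_nhds
    ((hyperfilter ℕ).map fun N u v => k N u v / c N)
    (tendsto_principal.2 (.of_forall fun N => (hk N).toIsAllocation.div_of_floor hB (hc N)))
  have hkx : ∀ u w, Tendsto (fun N => k N u w / c N) (hyperfilter ℕ) (𝓝 (x u w)) := fun u w =>
    tendsto_pi_nhds.1 (tendsto_pi_nhds.1 hlim u) w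
  refine ⟨x, hx, fun u v huv => ?_⟩
  exact (Ultrafilter.eventually_or.1 (.of_forall fun N => (hk N).isOptimalVia_or u v huv)).imp
    (isOptimalVia_of_tendsto (hcont u) hc_lim (hkx u))
    (isOptimalVia_of_tendsto (hcont v) hc_lim (hkx v))

end Existence

section Uniqueness

open Filter Topology

lemma eventually_lt_abs_sub [Finite ι] (x x' : ι → ι → ℝ) :
    ∀ᶠ δ in 𝓝[>] (0 : ℝ), ∀ u v, x u v ≠ x' u v → δ < |x u v - x' u v| := by
  simp only [eventually_all]
  intro u v huv
  filter_upwards [Ioo_mem_nhdsGT (abs_pos.2 (sub_ne_zero.2 huv))] with δ hδ using hδ.2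

variable [Fintype ι] {G : SimpleGraph ι} {B : ι → ℝ} {κ : ι → ι → ℝ → ℝ} {x x' : ι → ι → ℝ}

lemma IsStableAllocation.exists_increment_lt (hx : IsStableAllocation G B κ x)
    (hx' : IsAllocation G B x') (hsymm : ∀ u v, κ u v = κ v u)
    (hmono : ∀ u v, MonotoneOn (κ u v) (Set.Ici 0))
    (hconc : ∀ u v, G.Adj u v → StrictConcaveOn ℝ (Set.Ici 0) (κ u v)) {δ : ℝ} (hδ : 0 < δ)
    (hsep : ∀ u v, x u v ≠ x' u v → δ < |x u v - x' u v|) {u v : ι} (hlt : x u v < x' u v) :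
    ∃ c w, x' c w < x c w ∧
      κ u v (x u v + δ) - κ u v (x u v) < κ c w (x' c w + δ) - κ c w (x' c w) := by
  have hadj : ∀ {y : ι → ι → ℝ} {c w}, IsAllocation G B y → 0 < y c w → G.Adj c w :=
    fun hy hpos => by_contra fun hcw => hpos.ne' (hy.eq_zero _ _ hcw)
  have huv : G.Adj u v := hadj hx' ((hx.nonneg u v).trans_lt hlt)
  have through : ∀ {c w}, G.Adj c w → IsOptimalVia (κ c) (B c) (x c) w → x c w < x' c w →
      ∃ z, x' c z < x c z ∧
        κ c w (x c w + δ) - κ c w (x c w) < κ c z (x' c z + δ) - κ c z (x' c z) :=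
    fun {c w} hcw hopt hlt => hopt.exists_increment_lt
      (strictMonoOn_of_strictConcaveOn (hconc c w hcw) (hmono c w))
      (fun z hz => hconc c z (hadj hx.toIsAllocation hz)) (hx.nonneg c) (hx.sum_le c)
      (hx'.nonneg c) (hx'.sum_le c) hlt hδ
      fun z hz => (hsep c z hz.ne').trans_eq (abs_of_pos (sub_pos.2 hz))
  rcases hx.isOptimalVia_or u v huv with hopt | hopt
  · exact ⟨u, through huv hopt hlt⟩
  · rw [hx.symm u v, hx'.symm u v] at hlt
    rw [hsymm u v, hx.symm u v]
    exact ⟨v, through huv.symm hopt hlt⟩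

theorem IsStableAllocation.eq (hx : IsStableAllocation G B κ x)
    (hx' : IsStableAllocation G B κ x') (hsymm : ∀ u v, κ u v = κ v u)
    (hmono : ∀ u v, MonotoneOn (κ u v) (Set.Ici 0))
    (hconc : ∀ u v, G.Adj u v → StrictConcaveOn ℝ (Set.Ici 0) (κ u v)) : x = x' := by
  classical
  by_contra hne
  obtain ⟨δ, hsep, hδ⟩ := ((eventually_lt_abs_sub x x').and self_mem_nhdsWithin).exists
  let marginal : ι × ι → ℝ := fun p =>
    κ p.1 p.2 (min (x p.1 p.2) (x' p.1 p.2) + δ) - κ p.1 p.2 (min (x p.1 p.2) (x' p.1 p.2))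
  let disagreement : Finset (ι × ι) := {p | x p.1 p.2 ≠ x' p.1 p.2}
  have hnonempty : disagreement.Nonempty := by
    by_contra hempty
    refine hne (funext₂ fun u v => by_contra fun huv => hempty ⟨(u, v), ?_⟩)
    simpa [disagreement] using huv
  obtain ⟨⟨u, v⟩, huv, hmax⟩ := disagreement.exists_max_image marginal hnonempty
  have hmax : ∀ c w, x c w ≠ x' c w → marginal (c, w) ≤ marginal (u, v) := fun c w hcw =>
    hmax (c, w) (by simpa [disagreement] using hcw)
  rcases lt_or_gt_of_ne (show x u v ≠ x' u v by simpa [disagreement] using huv) with hlt | hlt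
  · obtain ⟨c, w, hcw, hinc⟩ :=
      hx.exists_increment_lt hx'.toIsAllocation hsymm hmono hconc hδ hsep hlt
    refine (hmax c w hcw.ne').not_gt ?_
    simpa only [marginal, min_eq_left hlt.le, min_eq_right hcw.le] using hinc
  · obtain ⟨c, w, hcw, hinc⟩ := hx'.exists_increment_lt hx.toIsAllocation hsymm hmono hconc hδ
      (fun c w hcw => (hsep c w hcw.symm).trans_eq (abs_sub_comm _ _)) hlt
    refine (hmax c w hcw.ne).not_gt ?_
    simpa only [marginal, min_eq_right hlt.le, min_eq_left hcw.le] using hinc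

end Uniqueness

section MinEffortGame

/-- The graph on which the game is played. -/
def NCGame.graph (g : NCGame V) : SimpleGraph V where
  Adj := g.Adj
  symm := ⟨g.adj_symm⟩
  loopless := ⟨g.adj_irrefl⟩

/-- `g` is a minimum effort game with edge rewards `κ`. Unlike the reward functions of `g`, which
are arbitrary off the edges, `κ` vanishes there, so that sums over neighbours become sums over all
vertices. -/
structure NCGame.IsMinEffort (g : NCGame V) (κ : V → V → ℝ → ℝ) : Prop where
  f_eq : ∀ u v, g.Adj u v → ∀ x y, g.f u v x y = κ u v (min x y)
  eq_zero : ∀ u v, ¬ g.Adj u v → κ u v = 0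

/-- The effort on each edge that counts in a minimum effort game, discarding excess effort. -/
def realizedEffort (s : ι → ι → ℝ) (u v : ι) : ℝ :=
  min (s u v) (s v u)

lemma realizedEffort_eq_self {x : ι → ι → ℝ} (hx : ∀ u v, x u v = x v u) :
    realizedEffort x = x := by
  ext u v
  rw [realizedEffort, hx v u, min_self]

variable {g : NCGame V} {κ : V → V → ℝ → ℝ} {s s' x : V → V → ℝ} {u v : V}

namespace NCGame.IsMinEffort

lemma symm (hκ : g.IsMinEffort κ) (u v : V) : κ u v = κ v u := by
  by_cases huv : g.Adj u v
  · ext z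
    simpa only [hκ.f_eq u v huv, hκ.f_eq v u (g.adj_symm u v huv), min_self] using
      g.f_comm u v z z
  · rw [hκ.eq_zero u v huv, hκ.eq_zero v u fun hvu => huv (g.adj_symm v u hvu)]

lemma monotoneOn (hκ : g.IsMinEffort κ) (u v : V) : MonotoneOn (κ u v) (Set.Ici 0) := by
  by_cases huv : g.Adj u v
  · intro y hy z hz hyz
    simpa only [hκ.f_eq u v huv, min_eq_left hyz, min_self] using g.f_mono u v z hz hy hz hyz
  · rw [hκ.eq_zero u v huv]
    exact monotoneOn_const

lemma util_eq (hκ : g.IsMinEffort κ) (s : V → V → ℝ) (v : V) :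
    util g s v = ∑ w, κ v w (realizedEffort s v w) := by
  refine sum_congr rfl fun w _ => ?_
  split_ifs with hvw
  · exact hκ.f_eq v w hvw _ _
  · simp [hκ.eq_zero v w hvw]

end NCGame.IsMinEffort

lemma isAllocation_realizedEffort (hs : validState g s) :
    IsAllocation g.graph g.B (realizedEffort s) where
  symm u v := min_comm _ _
  nonneg u v := le_min (hs.1 u v) (hs.1 v u)
  eq_zero u v huv := by
    rw [realizedEffort, hs.2.1 u v huv, hs.2.1 v u fun hvu => huv (g.adj_symm v u hvu), min_self]
  sum_le v := (sum_le_sum fun w _ => min_le_left _ _).trans (hs.2.2 v)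

lemma IsOptimalVia.util_le (hopt : IsOptimalVia (κ u) (g.B u) (x u) v) (hκ : g.IsMinEffort κ)
    (hx : IsAllocation g.graph g.B x) (hs : validState g s)
    (hsx : ∀ w, w ≠ u → w ≠ v → s w = x w) : util g s u ≤ util g x u := by
  have hs_alloc := isAllocation_realizedEffort hs
  rw [hκ.util_eq, hκ.util_eq, realizedEffort_eq_self hx.symm]
  refine hopt _ (hs_alloc.nonneg u) (hs_alloc.sum_le u) fun w hwv => ?_
  rcases eq_or_ne w u with rfl | hwu
  · rw [hs_alloc.eq_zero w w (g.adj_irrefl w), hx.eq_zero w w (g.adj_irrefl w)]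
  · calc realizedEffort s u w ≤ s w u := min_le_right _ _
      _ = x u w := by rw [hsx w hwu hwv, hx.symm]

theorem IsStableAllocation.isPairwiseEq (hx : IsStableAllocation g.graph g.B κ x)
    (hκ : g.IsMinEffort κ) : IsPairwiseEq g x := by
  have hopt_of_not_adj : ∀ u v, ¬ g.Adj u v → IsOptimalVia (κ u) (g.B u) (x u) v := fun u v huv =>
    isOptimalVia_of_eq_zero (hκ.monotoneOn u) (hx.nonneg u) (hκ.eq_zero u v huv)
  refine ⟨⟨⟨hx.nonneg, hx.eq_zero, hx.sum_le⟩, fun v t ht => ?_⟩, ?_⟩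
  · exact (hopt_of_not_adj v v (g.adj_irrefl v)).util_le hκ hx.toIsAllocation ht fun w hwv _ =>
      Function.update_of_ne hwv ..
  · rintro u v tu tv - ht ⟨hu, hv⟩
    have hother : ∀ w, w ≠ u → w ≠ v →
        Function.update (Function.update x u tu) v tv w = x w := fun w hwu hwv => by
      rw [Function.update_of_ne hwv, Function.update_of_ne hwu]
    have hopt : IsOptimalVia (κ u) (g.B u) (x u) v ∨ IsOptimalVia (κ v) (g.B v) (x v) u := by
      by_cases huv : g.Adj u v
      · exact hx.isOptimalVia_or u v huv
      · exact .inl (hopt_of_not_adj u v huv)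
    rcases hopt with hopt | hopt
    · exact hu.not_ge (hopt.util_le hκ hx.toIsAllocation ht hother)
    · exact hv.not_ge (hopt.util_le hκ hx.toIsAllocation ht fun w hwv hwu => hother w hwu hwv)

lemma validState_update (hs : validState g s) (hx : IsAllocation g.graph g.B x) (huv : g.Adj u v)
    {r : V → ℝ} (hr : ∀ w, 0 ≤ r w) (hrB : ∑ w, r w ≤ g.B u) (hrx : ∀ w, w ≠ v → r w ≤ x u w) :
    validState g (Function.update s u r) := by
  refine ⟨fun a w => ?_, fun a w haw => ?_, fun a => ?_⟩ <;> rcases eq_or_ne a u with rfl | hau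
  · simpa using hr w
  · simpa [hau] using hs.1 a w
  · have hwv : w ≠ v := by rintro rfl; exact haw huv
    simpa using le_antisymm ((hrx w hwv).trans_eq (hx.eq_zero a w haw)) (hr w)
  · simpa [hau] using hs.2.1 a w haw
  · simpa using hrB
  · simpa [hau] using hs.2.2 a

lemma NCGame.IsMinEffort.util_eq_of_le (hκ : g.IsMinEffort κ) (hle : ∀ w, s u w ≤ s w u) :
    util g s u = ∑ w, κ u w (s u w) := by
  simp only [hκ.util_eq, realizedEffort, min_eq_left (hle _)]

lemma NCGame.IsMinEffort.util_lt_of_improvement (hκ : g.IsMinEffort κ)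
    (hss' : ∀ w, w ≠ u → w ≠ v → s' w = s w) (huv : s' u v = s' v u)
    (hle : ∀ w, w ≠ v → s' u w ≤ realizedEffort s u w)
    (hlt : ∑ w, κ u w (realizedEffort s u w) < ∑ w, κ u w (s' u w)) :
    util g s u < util g s' u := by
  rw [hκ.util_eq, hκ.util_eq_of_le fun w => ?_]
  · exact hlt
  · rcases eq_or_ne w v with rfl | hwv
    · exact huv.le
    rcases eq_or_ne w u with rfl | hwu
    · exact le_rfl
    · rw [hss' w hwu hwv]
      exact (hle w hwv).trans (min_le_right _ _)

theorem IsPairwiseEq.isStableAllocation_realizedEffort (hs : IsPairwiseEq g s)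
    (hκ : g.IsMinEffort κ) (hconc : ∀ u v, ConcaveOn ℝ (Set.Ici 0) (κ u v)) :
    IsStableAllocation g.graph g.B κ (realizedEffort s) := by
  have hx := isAllocation_realizedEffort hs.1.1
  refine ⟨hx, fun u v huv => ?_⟩
  by_contra! hopt
  have himprove := fun a b => eventually_exists_improvement (u := b) (hκ.monotoneOn a) (hconc a)
    (hx.nonneg a) (hx.sum_le a)
  obtain ⟨d, ⟨ru, hru, hruB, hruv, hru_le, hru_lt⟩, ⟨rv, hrv, hrvB, hrvu, hrv_le, hrv_lt⟩⟩ :=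
    ((himprove u v hopt.1).and (himprove v u hopt.2)).exists
  have hne : u ≠ v := huv.ne
  set t := Function.update (Function.update s u ru) v rv with ht
  have htu : t u = ru := by simp [ht, hne]
  have htv : t v = rv := by simp [ht]
  have hother : ∀ w, w ≠ u → w ≠ v → t w = s w := fun w hwu hwv => by simp [ht, hwu, hwv]
  have hedge : t u v = t v u := by rw [htu, htv, hruv, hrvu, hx.symm]
  have hvalid : validState g t :=
    validState_update (validState_update hs.1.1 hx huv hru hruB hru_le) hx (g.adj_symm u v huv)
      hrv hrvB hrv_le
  rw [← htu] at hru_le hru_lt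
  rw [← htv] at hrv_le hrv_lt
  exact hs.2 u v ru rv hne hvalid ⟨hκ.util_lt_of_improvement hother hedge hru_le hru_lt,
    hκ.util_lt_of_improvement (fun w hwv hwu => hother w hwu hwv) hedge.symm hrv_le hrv_lt⟩

open Classical in
/-- The family `h` of edge rewards, replaced by `0` off the edges as required for
`NCGame.IsMinEffort`. -/
noncomputable def edgeReward (g : NCGame V) (h : V → V → ℝ → ℝ) (u v : V) : ℝ → ℝ :=
  if g.Adj u v then h u v else 0

variable {h : V → V → ℝ → ℝ}

lemma edgeReward_of_adj (huv : g.Adj u v) : edgeReward g h u v = h u v :=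
  if_pos huv

lemma edgeReward_of_not_adj (huv : ¬ g.Adj u v) : edgeReward g h u v = 0 :=
  if_neg huv

lemma isMinEffort_edgeReward (hmin : ∀ u v, g.Adj u v → ∀ x y, g.f u v x y = h u v (min x y)) :
    g.IsMinEffort (edgeReward g h) where
  f_eq u v huv x y := by rw [hmin u v huv, edgeReward_of_adj huv]
  eq_zero _ _ := edgeReward_of_not_adj

lemma concaveOn_edgeReward {S : Set ℝ} (hS : Convex ℝ S)
    (hconc : ∀ u v, g.Adj u v → ConcaveOn ℝ S (h u v)) (u v : V) :
    ConcaveOn ℝ S (edgeReward g h u v) := by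
  by_cases huv : g.Adj u v
  · rw [edgeReward_of_adj huv]
    exact hconc u v huv
  · rw [edgeReward_of_not_adj huv]
    exact concaveOn_const 0 hS

lemma continuousOn_edgeReward {S : Set ℝ} (hcont : ∀ u v, g.Adj u v → ContinuousOn (h u v) S)
    (u v : V) : ContinuousOn (edgeReward g h u v) S := by
  by_cases huv : g.Adj u v
  · rw [edgeReward_of_adj huv]
    exact hcont u v huv
  · rw [edgeReward_of_not_adj huv]
    exact continuousOn_const

end MinEffortGame

/-- minimum effort games with continuous concave `h_e` possess a
pairwise equilibrium; with strictly concave `h_e` the equilibrium is unique up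
to excess effort (the minimum effort on each edge is uniquely determined). -/
theorem min_effort_concave_exists (g : NCGame V)
    (h : V → V → ℝ → ℝ)
    (hmin : ∀ u v, g.Adj u v → ∀ x y, g.f u v x y = h u v (min x y))
    (hmono : ∀ u v, g.Adj u v → MonotoneOn (h u v) (Set.Ici 0))
    (h0 : ∀ u v, g.Adj u v → h u v 0 = 0)
    (hcont : ∀ u v, g.Adj u v → ContinuousOn (h u v) (Set.Ici 0))
    (hconc : ∀ u v, g.Adj u v → ConcaveOn ℝ (Set.Ici 0) (h u v)) :
    (∃ s, IsPairwiseEq g s) ∧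
    ((∀ u v, g.Adj u v → StrictConcaveOn ℝ (Set.Ici 0) (h u v)) →
      ∀ s s', IsPairwiseEq g s → IsPairwiseEq g s' → ∀ u v, g.Adj u v →
        min (s u v) (s v u) = min (s' u v) (s' v u)) := by
  have hκ := isMinEffort_edgeReward hmin
  have hconc_κ := concaveOn_edgeReward (convex_Ici 0) hconc
  refine ⟨?_, fun hstrict s s' hs hs' u v _ => ?_⟩
  · obtain ⟨x, hx⟩ := exists_isStableAllocation g.graph g.B_nonneg hκ.symm hκ.monotoneOn hconc_κ
      (continuousOn_edgeReward hcont)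
    exact ⟨x, hx.isPairwiseEq hκ⟩
  · have hstrict_κ : ∀ u v, g.graph.Adj u v →
        StrictConcaveOn ℝ (Set.Ici 0) (edgeReward g h u v) := fun u v huv => by
      rw [edgeReward_of_adj huv]
      exact hstrict u v huv
    exact congrFun₂ ((hs.isStableAllocation_realizedEffort hκ hconc_κ).eq
      (hs'.isStableAllocation_realizedEffort hκ hconc_κ) hκ.symm hκ.monotoneOn hstrict_κ) u v
end

section
/- Consider a maximum effort game in which every function h_e is nondecreasing and continuous. Then every social optimum is a pairwise equilibrium; in particular a pairwise equilibrium exists, and the price of stability for pairwise equilibria is 1. -/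
open Finset

variable {V : Type} [Fintype V] [DecidableEq V]

/-!
Each edge pays the same reward to both endpoints, so a unilateral deviation changes the welfare by
twice the gain of the deviating player; hence a social optimum is a Nash equilibrium. In a maximum
effort game a Nash equilibrium is already pairwise stable: if `u` and `v` deviate jointly and `u`
contributes at least as much as `v` to their common edge, then `u` loses nothing when `v` reverts
to its old strategy, so `u` could have profited alone. Optima exist because the states form a
compact set.
-/

section SymmetricSums

variable {ι M : Type*} [Fintype ι] [DecidableEq ι] [AddCommMonoid M]

lemma sum_sum_add_diag_eq_of_symm {R : ι → ι → M} (hR : ∀ a b, R a b = R b a) (i : ι) :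
    ∑ a, ∑ b, R a b + R i i = 2 • ∑ b, R i b + ∑ a ∈ {i}ᶜ, ∑ b ∈ {i}ᶜ, R a b := by
  have row_split (a : ι) : ∑ b, R a b = R i a + ∑ b ∈ {i}ᶜ, R a b := by
    rw [Fintype.sum_eq_add_sum_compl i, hR]
  calc ∑ a, ∑ b, R a b + R i i
      = ∑ b, R i b + ∑ a ∈ {i}ᶜ, (R i a + ∑ b ∈ {i}ᶜ, R a b) + R i i := by
        rw [Fintype.sum_eq_add_sum_compl i, sum_congr rfl fun a _ ↦ row_split a]
    _ = ∑ b, R i b + (R i i + ∑ b ∈ {i}ᶜ, R i b) + ∑ a ∈ {i}ᶜ, ∑ b ∈ {i}ᶜ, R a b := by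
        rw [sum_add_distrib]
        abel
    _ = 2 • ∑ b, R i b + ∑ a ∈ {i}ᶜ, ∑ b ∈ {i}ᶜ, R a b := by
        rw [← row_split i, two_nsmul]

end SymmetricSums

namespace NCGame

/-- A social optimum: a valid state of maximum welfare among the valid states. -/
def IsSocialOptimum (g : NCGame V) (s : V → V → ℝ) : Prop :=
  validState g s ∧ ∀ s', validState g s' → welfare g s' ≤ welfare g s

/-- A maximum effort game: the reward of every edge is a function of the larger contribution.
Contributions are nonnegative, so rewards at negative arguments are left unconstrained. -/
def IsMaxEffort (g : NCGame V) : Prop :=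
  ∀ u v, g.Adj u v → ∃ φ : ℝ → ℝ, ∀ x y, 0 ≤ x → 0 ≤ y → g.f u v x y = φ (max x y)

/-- The strategies of player `v`: nonnegative efforts on the edges at `v` within its budget.
As in `validState`, efforts are indexed by all players and vanish off the edges. -/
def strategySet (g : NCGame V) (v : V) : Set (V → ℝ) :=
  {t | (∀ u, 0 ≤ t u) ∧ (∀ u, ¬ g.Adj v u → t u = 0) ∧ ∑ u, t u ≤ g.B v}

open Classical in
/-- The reward each endpoint of the edge `(a, b)` receives in the state `s`, extended by `0` to
non-adjacent pairs so that utilities are sums over all players. -/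
noncomputable def edgeReward (g : NCGame V) (s : V → V → ℝ) (a b : V) : ℝ :=
  if g.Adj a b then g.f a b (s a b) (s b a) else 0

variable {g : NCGame V} {s s' : V → V → ℝ} {u v : V}

lemma edgeReward_of_adj (s : V → V → ℝ) (huv : g.Adj u v) :
    edgeReward g s u v = g.f u v (s u v) (s v u) :=
  if_pos huv

lemma edgeReward_of_not_adj (s : V → V → ℝ) (huv : ¬ g.Adj u v) : edgeReward g s u v = 0 :=
  if_neg huv

lemma edgeReward_comm (g : NCGame V) (s : V → V → ℝ) (u v : V) :
    edgeReward g s u v = edgeReward g s v u := by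
  by_cases huv : g.Adj u v
  · rw [edgeReward_of_adj s huv, edgeReward_of_adj s (g.adj_symm u v huv), g.f_comm, g.f_symm]
  · rw [edgeReward_of_not_adj s huv, edgeReward_of_not_adj s fun hvu ↦ huv (g.adj_symm v u hvu)]

lemma util_eq_sum_edgeReward (g : NCGame V) (s : V → V → ℝ) (v : V) :
    util g s v = ∑ u, edgeReward g s v u :=
  rfl

lemma welfare_eq_two_mul_util_add (g : NCGame V) (s : V → V → ℝ) (v : V) :
    welfare g s = 2 * util g s v + ∑ a ∈ {v}ᶜ, ∑ b ∈ {v}ᶜ, edgeReward g s a b := by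
  have symm_sum := sum_sum_add_diag_eq_of_symm (edgeReward_comm g s) v
  rwa [edgeReward_of_not_adj s (g.adj_irrefl v), add_zero, nsmul_eq_mul, Nat.cast_ofNat]
    at symm_sum

lemma welfare_update_sub_welfare (g : NCGame V) (s : V → V → ℝ) (v : V) (t : V → ℝ) :
    welfare g (Function.update s v t) - welfare g s =
      2 * (util g (Function.update s v t) v - util g s v) := by
  have rest_eq : ∑ a ∈ {v}ᶜ, ∑ b ∈ {v}ᶜ, edgeReward g (Function.update s v t) a b =
      ∑ a ∈ {v}ᶜ, ∑ b ∈ {v}ᶜ, edgeReward g s a b := by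
    refine sum_congr rfl fun a ha ↦ sum_congr rfl fun b hb ↦ ?_
    simp only [mem_compl, mem_singleton] at ha hb
    simp only [edgeReward, Function.update_of_ne ha, Function.update_of_ne hb]
  rw [welfare_eq_two_mul_util_add g _ v, welfare_eq_two_mul_util_add g s v, rest_eq]
  ring

theorem IsSocialOptimum.isNashEq (hs : IsSocialOptimum g s) : IsNashEq g s := by
  refine ⟨hs.1, fun v t hvalid ↦ ?_⟩
  linarith [hs.2 _ hvalid, welfare_update_sub_welfare g s v t]

lemma validState_iff_forall_mem_strategySet :
    validState g s ↔ ∀ v, s v ∈ g.strategySet v := by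
  simp only [validState, strategySet, Set.mem_ofPred_eq, forall_and]

lemma validState_update (hs : validState g s) (hs' : validState g s') (u : V) :
    validState g (Function.update s u (s' u)) := by
  rw [validState_iff_forall_mem_strategySet] at hs hs' ⊢
  exact (Function.forall_update_iff s fun v t ↦ t ∈ g.strategySet v).2 ⟨hs' u, fun v _ ↦ hs v⟩

lemma IsMaxEffort.f_le_f_of_le (hg : g.IsMaxEffort) (huv : g.Adj u v) {x y z : ℝ}
    (hy : 0 ≤ y) (hz : 0 ≤ z) (hyx : y ≤ x) : g.f u v x y ≤ g.f u v x z := by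
  obtain ⟨φ, hφ⟩ := hg u v huv
  have hx : 0 ≤ x := hy.trans hyx
  calc g.f u v x y = g.f u v x 0 := by
        rw [hφ x y hx hy, hφ x 0 hx le_rfl, max_eq_left hyx, max_eq_left hx]
    _ = g.f u v 0 x := g.f_symm u v x 0
    _ ≤ g.f u v z x := g.f_mono u v x hx Set.self_mem_Ici hz hz
    _ = g.f u v x z := g.f_symm u v z x

lemma IsMaxEffort.util_le_util_update (hg : g.IsMaxEffort) (hs : validState g s)
    (hs' : validState g s') (agree : ∀ a, a ≠ u → a ≠ v → s' a = s a)
    (hle : s' v u ≤ s' u v) :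
    util g s' u ≤ util g (Function.update s u (s' u)) u := by
  rw [util_eq_sum_edgeReward, util_eq_sum_edgeReward]
  refine sum_le_sum fun b _ ↦ ?_
  by_cases hub : g.Adj u b
  · have hbu : b ≠ u := by
      rintro rfl
      exact g.adj_irrefl b hub
    rw [edgeReward_of_adj _ hub, edgeReward_of_adj _ hub, Function.update_self,
      Function.update_of_ne hbu]
    obtain rfl | hbv := eq_or_ne b v
    · exact hg.f_le_f_of_le hub (hs'.1 b u) (hs.1 b u) hle
    · rw [agree b hbu hbv]
  · rw [edgeReward_of_not_adj _ hub, edgeReward_of_not_adj _ hub]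

lemma IsMaxEffort.util_le_of_isNashEq (hg : g.IsMaxEffort) (hs : IsNashEq g s)
    (hs' : validState g s') (agree : ∀ a, a ≠ u → a ≠ v → s' a = s a)
    (hle : s' v u ≤ s' u v) : util g s' u ≤ util g s u :=
  (hg.util_le_util_update hs.1 hs' agree hle).trans
    (hs.2 u (s' u) (validState_update hs.1 hs' u))

theorem IsMaxEffort.isPairwiseEq_of_isNashEq (hg : g.IsMaxEffort) (hs : IsNashEq g s) :
    IsPairwiseEq g s := by
  refine ⟨hs, fun u v tu tv _ hvalid ⟨hu, hv⟩ ↦ ?_⟩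
  set s' := Function.update (Function.update s u tu) v tv
  have agree (a : V) (hau : a ≠ u) (hav : a ≠ v) : s' a = s a := by
    simp only [s', Function.update_of_ne hav, Function.update_of_ne hau]
  rcases le_total (s' v u) (s' u v) with hle | hle
  · exact hu.not_ge (hg.util_le_of_isNashEq hs hvalid agree hle)
  · exact hv.not_ge (hg.util_le_of_isNashEq hs hvalid (fun a hav hau ↦ agree a hau hav) hle)

lemma isClosed_strategySet (g : NCGame V) (v : V) : IsClosed (g.strategySet v) := by
  simp only [strategySet, Set.ofPred_and, Set.ofPred_forall]
  refine (isClosed_iInter fun u ↦ ?_).inter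
    ((isClosed_iInter fun u ↦ isClosed_iInter fun _ ↦ ?_).inter ?_)
  · exact isClosed_le continuous_const (continuous_apply u)
  · exact isClosed_eq (continuous_apply u) continuous_const
  · exact isClosed_le (by fun_prop) continuous_const

lemma isCompact_strategySet (g : NCGame V) (v : V) : IsCompact (g.strategySet v) := by
  refine (isCompact_Icc (a := 0) (b := fun _ ↦ g.B v)).of_isClosed_subset
    (g.isClosed_strategySet v) ?_
  rintro t ⟨nonneg, -, budget⟩
  exact ⟨nonneg, fun u ↦ (single_le_sum (fun b _ ↦ nonneg b) (mem_univ u)).trans budget⟩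

lemma isCompact_setOf_validState (g : NCGame V) : IsCompact {s | validState g s} := by
  simpa only [Set.pi, Set.mem_univ, true_imp_iff, ← validState_iff_forall_mem_strategySet]
    using isCompact_univ_pi g.isCompact_strategySet

lemma validState_zero (g : NCGame V) : validState g 0 :=
  ⟨fun _ _ ↦ le_rfl, fun _ _ _ ↦ rfl, fun v ↦ by simpa using g.B_nonneg v⟩

lemma continuousOn_welfare
    (hf : ∀ u v, g.Adj u v → ContinuousOn (Function.uncurry (g.f u v)) (Set.Ici 0)) :
    ContinuousOn (welfare g) {s | validState g s} := by
  refine continuousOn_finsetSum _ fun v _ ↦ continuousOn_finsetSum _ fun u _ ↦ ?_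
  split_ifs with hvu
  · exact (hf v u hvu).comp (f := fun s : V → V → ℝ ↦ (s v u, s u v)) (by fun_prop)
      fun s hs ↦ ⟨hs.1 v u, hs.1 u v⟩
  · exact continuousOn_const

theorem exists_isSocialOptimum
    (hf : ∀ u v, g.Adj u v → ContinuousOn (Function.uncurry (g.f u v)) (Set.Ici 0)) :
    ∃ s, IsSocialOptimum g s := by
  obtain ⟨s, hs, hmax⟩ := g.isCompact_setOf_validState.exists_isMaxOn ⟨0, g.validState_zero⟩
    (continuousOn_welfare hf)
  exact ⟨s, hs, fun _ hs' ↦ hmax hs'⟩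

end NCGame

/-- in maximum effort games with nondecreasing continuous `h_e`,
every social optimum is a pairwise equilibrium; in particular a pairwise
equilibrium exists and the price of stability for pairwise equilibria is 1. -/
theorem max_effort_optimum_is_pairwise (g : NCGame V)
    (h : V → V → ℝ → ℝ)
    (hmax : ∀ u v, g.Adj u v → ∀ x y, g.f u v x y = h u v (max x y))
    (hmono : ∀ u v, g.Adj u v → MonotoneOn (h u v) (Set.Ici 0))
    (hcont : ∀ u v, g.Adj u v → ContinuousOn (h u v) (Set.Ici 0)) :
    (∀ s, validState g s → (∀ s', validState g s' → welfare g s' ≤ welfare g s) →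
      IsPairwiseEq g s) ∧
    (∃ s, IsPairwiseEq g s ∧ ∀ s', validState g s' → welfare g s' ≤ welfare g s) := by
  have maxEffort : g.IsMaxEffort := fun u v huv ↦ ⟨h u v, fun x y _ _ ↦ hmax u v huv x y⟩
  have pairwise_of_optimum (s) (hs : g.IsSocialOptimum s) : IsPairwiseEq g s :=
    maxEffort.isPairwiseEq_of_isNashEq hs.isNashEq
  have reward_continuousOn (u v) (huv : g.Adj u v) :
      ContinuousOn (Function.uncurry (g.f u v)) (Set.Ici 0) := by
    have max_mapsTo : Set.MapsTo (fun p : ℝ × ℝ ↦ max p.1 p.2) (Set.Ici 0) (Set.Ici 0) :=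
      fun _ hp ↦ le_max_of_le_left hp.1
    exact ((hcont u v huv).comp (by fun_prop) max_mapsTo).congr fun p _ ↦ hmax u v huv p.1 p.2
  obtain ⟨s, hs⟩ := NCGame.exists_isSocialOptimum reward_continuousOn
  exact ⟨fun s hvalid hopt ↦ pairwise_of_optimum s ⟨hvalid, hopt⟩,
    s, pairwise_of_optimum s hs, hs.2⟩
end
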